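/- Let f : ℝ^d → ℂ be (2π)^d-periodic (2π-periodic in each of its d variables), and assume that the mixed partial derivative D^{(M,…,M)} f = ∂₁^M ⋯ ∂_d^M f exists and is bounded on ℝ^d. Let N ≥ 2 and set f_n = f(2πn/N) for n ∈ 𝒩 = {0,…,N−1}^d, and let c_k = Σ_{n∈𝒩} f_n e^{−(2πi/N) k·n} be the discrete Fourier coefficients. Then for every k ∈ 𝒩 with k_j ≠ 0 for all j = 1,…,d, one has |c_k| ≤ N^d (2π/N)^{Md} ‖D^{(M,…,M)} f‖_∞ ∏_{j=1}^d |e^{−2πi k_j/N} − 1|^{−M}. -/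

import Mathlib

/-!
The proof is summation by parts on the grid. With `h = 2π/N`, let `Δ_j g (x) = g (x + h e_j) - g x`
be the forward difference in direction `j`, and let `F g = ∑_n g(x_n) e^{-i k·x_n}` be the discrete
Fourier coefficient. For periodic `g`, shifting the grid gives
`‖F (Δ_j g)‖ = ‖e^{-2πi k_j/N} - 1‖ ‖F g‖` (`norm_gridSum_fwdDiffDir`), so applying `M` differences in
each direction multiplies `‖c_k‖` by `∏_j ‖e^{-2πi k_j/N} - 1‖^M`, which is nonzero.

On the other side, `‖Δ^{(M,…,M)} f‖ ≤ h^{Md} K` (`norm_applyDiffs_le`): the derivatives are traded for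
differences one at a time, from the outermost inwards. Differences commute with one another and with
the outermost remaining derivative, so each trade is a one-dimensional mean value inequality; no
continuity of the derivatives and no symmetry of mixed derivatives is used.
-/

open Real Finset

/-- Partial derivative (line derivative) in the `j`-th coordinate direction. -/
noncomputable def pderivDir (d : ℕ) (j : Fin d) (g : (Fin d → ℝ) → ℂ) : (Fin d → ℝ) → ℂ :=
  fun x => lineDeriv ℝ g x (Pi.single j 1)

/-- Apply a list of partial-derivative operators (rightmost applied first). -/
noncomputable def applyOps (d : ℕ) : List (Fin d) → ((Fin d → ℝ) → ℂ) → ((Fin d → ℝ) → ℂ)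
  | [], g => g
  | j :: rest, g => pderivDir d j (applyOps d rest g)

/-- Forward difference with step `h` in the `j`-th coordinate direction. -/
noncomputable def fwdDiffDir (d : ℕ) (h : ℝ) (j : Fin d) (g : (Fin d → ℝ) → ℂ) :
    (Fin d → ℝ) → ℂ :=
  fun x => g (x + Pi.single j h) - g x

/-- Apply a list of forward differences with step `h` (rightmost applied first). -/
noncomputable def applyDiffs (d : ℕ) (h : ℝ) :
    List (Fin d) → ((Fin d → ℝ) → ℂ) → ((Fin d → ℝ) → ℂ)
  | [], g => g
  | j :: rest, g => fwdDiffDir d h j (applyDiffs d h rest g)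

lemma fwdDiffDir_comm (d : ℕ) (h : ℝ) (i j : Fin d) (g : (Fin d → ℝ) → ℂ) :
    fwdDiffDir d h i (fwdDiffDir d h j g) = fwdDiffDir d h j (fwdDiffDir d h i g) := by
  funext x
  simp only [fwdDiffDir, add_right_comm x (Pi.single i h) (Pi.single j h)]
  ring

lemma applyDiffs_append_singleton (d : ℕ) (h : ℝ) (L : List (Fin d)) (j : Fin d)
    (g : (Fin d → ℝ) → ℂ) :
    applyDiffs d h (L ++ [j]) g = fwdDiffDir d h j (applyDiffs d h L g) := by
  induction L with
  | nil => rfl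
  | cons i L ih =>
    rw [List.cons_append, applyDiffs, ih, fwdDiffDir_comm, applyDiffs]

/-- Differences in any directions commute with an existing line derivative. -/
lemma applyDiffs_hasLineDerivAt (d : ℕ) (h : ℝ) (L : List (Fin d)) (v : Fin d → ℝ)
    (g g' : (Fin d → ℝ) → ℂ) (hg : ∀ x, HasLineDerivAt ℝ g (g' x) x v) (x : Fin d → ℝ) :
    HasLineDerivAt ℝ (applyDiffs d h L g) (applyDiffs d h L g' x) x v := by
  induction L generalizing x with
  | nil => exact hg x
  | cons i L ih =>
    have h1 := ih (x + Pi.single i h)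
    have h2 := ih x
    unfold HasLineDerivAt at h1 h2 ⊢
    refine (h1.sub h2).congr_of_eventuallyEq (Filter.Eventually.of_forall fun t => ?_)
    simp only [applyDiffs, fwdDiffDir, Pi.sub_apply, add_right_comm x (t • v)]

/-- The mean value inequality in one coordinate direction. -/
lemma norm_fwdDiffDir_le (d : ℕ) (h : ℝ) (hh : 0 ≤ h) (j : Fin d) (g g' : (Fin d → ℝ) → ℂ)
    (hg : ∀ x, HasLineDerivAt ℝ g (g' x) x (Pi.single j 1)) (B : ℝ) (hB : ∀ x, ‖g' x‖ ≤ B)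
    (x : Fin d → ℝ) : ‖fwdDiffDir d h j g x‖ ≤ h * B := by
  have hderiv : ∀ t : ℝ, HasDerivAt (fun t : ℝ => g (x + t • Pi.single j 1))
      (g' (x + t • Pi.single j 1)) t := by
    intro t
    have h1 := hg (x + t • Pi.single j 1)
    unfold HasLineDerivAt at h1
    have h2 : HasDerivAt (fun s : ℝ => s - t) 1 t := (hasDerivAt_id t).sub_const t
    have h1' : HasDerivAt (fun s : ℝ => g (x + t • Pi.single j 1 + s • Pi.single j 1))
      (g' (x + t • Pi.single j 1)) (t - t) := by rwa [sub_self]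
    have h3 := HasDerivAt.scomp (h := fun s : ℝ => s - t) t h1' h2
    rw [one_smul] at h3
    refine h3.congr_of_eventuallyEq (Filter.Eventually.of_forall fun s => ?_)
    simp only [Function.comp]
    congr 1
    rw [add_assoc, ← add_smul]
    congr 2
    ring
  have key := Convex.norm_image_sub_le_of_norm_hasDerivWithin_le (s := Set.univ)
    (f := fun t : ℝ => g (x + t • Pi.single j 1)) (C := B) (x := 0) (y := h)
    (fun t _ => (hderiv t).hasDerivWithinAt) (fun t _ => hB _) convex_univ
    (Set.mem_univ _) (Set.mem_univ _)
  have e : h • (Pi.single j 1 : Fin d → ℝ) = Pi.single j h := by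
    rw [← Pi.single_smul, smul_eq_mul, mul_one]
  simp only [e, zero_smul, add_zero, sub_zero, Real.norm_of_nonneg hh] at key
  rw [mul_comm]
  exact key

/-- The outermost derivatives `pre` of the mixed derivative are replaced by differences, at the
cost of a factor `h` each; the innermost ones `suf` are kept. -/
lemma norm_applyDiffs_le (d : ℕ) (h : ℝ) (hh : 0 ≤ h) (f : (Fin d → ℝ) → ℂ) (ops : List (Fin d))
    (hex : ∀ (j : Fin d) (rest : List (Fin d)), (j :: rest) <:+ ops →
      ∀ x : Fin d → ℝ, LineDifferentiableAt ℝ (applyOps d rest f) x (Pi.single j 1))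
    (K : ℝ) (hK : ∀ x, ‖applyOps d ops f x‖ ≤ K) (pre : List (Fin d)) :
    ∀ suf, ops = pre ++ suf → ∀ x,
      ‖applyDiffs d h pre (applyOps d suf f) x‖ ≤ h ^ pre.length * K := by
  induction pre using List.reverseRecOn with
  | nil =>
    rintro suf rfl x
    simpa [applyDiffs] using hK x
  | append_singleton L j ih =>
    intro suf hs x
    have hs' : ops = L ++ (j :: suf) := by simpa using hs
    rw [applyDiffs_append_singleton]
    have := norm_fwdDiffDir_le d h hh j _ _
      (applyDiffs_hasLineDerivAt d h L (Pi.single j 1) (applyOps d suf f)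
        (applyOps d (j :: suf) f)
        (fun y => (hex j suf ⟨L, hs'.symm⟩ y).hasLineDerivAt))
      _ (ih (j :: suf) hs') x
    refine this.trans (le_of_eq ?_)
    rw [List.length_append, List.length_singleton, pow_succ]
    ring

/-- Periodicity with period `2π` in every coordinate. -/
def PeriodicCoord (d : ℕ) (g : (Fin d → ℝ) → ℂ) : Prop :=
  ∀ (x : Fin d → ℝ) (j : Fin d), g (x + Pi.single j (2 * π)) = g x

lemma PeriodicCoord.applyDiffs {d : ℕ} {f : (Fin d → ℝ) → ℂ} (hf : PeriodicCoord d f) (h : ℝ)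
    (L : List (Fin d)) : PeriodicCoord d (applyDiffs d h L f) := by
  induction L with
  | nil => exact hf
  | cons i L ih =>
    intro x j
    simp only [_root_.applyDiffs, fwdDiffDir]
    rw [add_right_comm, ih, ih]

/-- The grid point `2πn/N`. -/
noncomputable def gridPt (d N : ℕ) (n : Fin d → Fin N) : Fin d → ℝ :=
  fun j => 2 * π * (n j : ℕ) / N

/-- The sum of a periodic function over the grid is invariant under a one-step shift. -/
lemma sum_grid_shift (d N : ℕ) (hN : 2 ≤ N) (g : (Fin d → ℝ) → ℂ) (hg : PeriodicCoord d g)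
    (j : Fin d) :
    ∑ n : Fin d → Fin N, g (gridPt d N n + Pi.single j (2 * π / N)) =
      ∑ n : Fin d → Fin N, g (gridPt d N n) := by
  have : NeZero N := ⟨by omega⟩
  have hN0 : (N : ℝ) ≠ 0 := by positivity
  rw [← Equiv.sum_comp (Equiv.addRight (Pi.single j (1 : Fin N) : Fin d → Fin N))
    (fun n => g (gridPt d N n))]
  refine Finset.sum_congr rfl fun n _ => ?_
  have h1 : ((1 : Fin N) : ℕ) = 1 := by
    rw [Fin.val_one', Nat.mod_eq_of_lt (by omega)]
  have hlt := (n j).isLt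
  simp only [Equiv.coe_addRight]
  by_cases hc : (n j : ℕ) + 1 = N
  · -- the shifted index wraps around to `0`, and the point moves by a full period
    rw [← hg (gridPt d N (n + Pi.single j 1)) j]
    congr 1
    funext i
    by_cases hi : i = j
    · subst hi
      have hv : ((n i + 1 : Fin N) : ℕ) = 0 := by
        rw [Fin.val_add, h1, hc, Nat.mod_self]
      have hc' : ((n i : ℕ) : ℝ) = N - 1 := by
        rw [eq_sub_iff_add_eq]; exact_mod_cast hc
      simp only [gridPt, Pi.add_apply, Pi.single_eq_same, hv, hc']
      field_simp
      push_cast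
      ring
    · simp [gridPt, hi]
  · congr 1
    funext i
    by_cases hi : i = j
    · subst hi
      have hv : ((n i + 1 : Fin N) : ℕ) = n i + 1 := by
        rw [Fin.val_add, h1, Nat.mod_eq_of_lt (by omega)]
      simp only [gridPt, Pi.add_apply, Pi.single_eq_same, hv]
      push_cast
      ring
    · simp [gridPt, hi]

/-- The character `x ↦ e^{-i k·x}`. -/
noncomputable def character (d N : ℕ) (k : Fin d → Fin N) (x : Fin d → ℝ) : ℂ :=
  Complex.exp (-Complex.I * ∑ j, ((k j : ℕ) : ℂ) * (x j : ℂ))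

lemma character_add_single (d N : ℕ) (k : Fin d → Fin N) (x : Fin d → ℝ) (j : Fin d) (t : ℝ) :
    character d N k (x + Pi.single j t) =
      Complex.exp (-Complex.I * (((k j : ℕ) : ℂ) * t)) * character d N k x := by
  have hsum : ∑ i, ((k i : ℕ) : ℂ) * (((Pi.single j t : Fin d → ℝ) i : ℝ) : ℂ)
      = ((k j : ℕ) : ℂ) * t := by
    rw [Finset.sum_eq_single j]
    · simp
    · intro i _ hi
      simp [hi]
    · simp
  unfold character
  rw [← Complex.exp_add]
  congr 1
  simp only [Pi.add_apply, Complex.ofReal_add, mul_add, Finset.sum_add_distrib, hsum]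
  ring

lemma norm_character (d N : ℕ) (k : Fin d → Fin N) (x : Fin d → ℝ) :
    ‖character d N k x‖ = 1 := by
  unfold character
  have : -Complex.I * ∑ j, ((k j : ℕ) : ℂ) * (x j : ℂ)
      = ((-∑ j, ((k j : ℕ) : ℝ) * x j : ℝ) : ℂ) * Complex.I := by
    push_cast
    ring
  rw [this, Complex.norm_exp_ofReal_mul_I]

lemma periodicCoord_character (d N : ℕ) (k : Fin d → Fin N) :
    PeriodicCoord d (character d N k) := by
  intro x j
  rw [character_add_single]
  have : Complex.exp (-Complex.I * (((k j : ℕ) : ℂ) * ((2 * π : ℝ) : ℂ))) = 1 := by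
    rw [Complex.exp_eq_one_iff]
    refine ⟨-((k j : ℕ) : ℤ), ?_⟩
    push_cast
    ring
  rw [this, one_mul]

/-- The `k`-th discrete Fourier coefficient of the grid values of `g`. -/
noncomputable def gridSum (d N : ℕ) (k : Fin d → Fin N) (g : (Fin d → ℝ) → ℂ) : ℂ :=
  ∑ n : Fin d → Fin N, g (gridPt d N n) * character d N k (gridPt d N n)

/-- Summation by parts. -/
lemma norm_gridSum_fwdDiffDir (d N : ℕ) (hN : 2 ≤ N) (k : Fin d → Fin N)
    (g : (Fin d → ℝ) → ℂ) (hg : PeriodicCoord d g) (j : Fin d) :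
    ‖gridSum d N k (fwdDiffDir d (2 * π / N) j g)‖ =
      ‖Complex.exp (-(2 * π * Complex.I * ((k j : ℕ) : ℂ)) / N) - 1‖ * ‖gridSum d N k g‖ := by
  set w : ℂ := Complex.exp (-(2 * π * Complex.I * ((k j : ℕ) : ℂ)) / N) with hw
  have hwe : Complex.exp (-Complex.I * (((k j : ℕ) : ℂ) * ((2 * π / N : ℝ) : ℂ))) = w := by
    rw [hw]
    congr 1
    push_cast
    ring
  have hwn : ‖w‖ = 1 := by
    rw [hw, show -(2 * π * Complex.I * ((k j : ℕ) : ℂ)) / N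
      = ((-(2 * π * (k j : ℕ)) / N : ℝ) : ℂ) * Complex.I by push_cast; ring,
      Complex.norm_exp_ofReal_mul_I]
  have hshift := sum_grid_shift d N hN (fun x => g x * character d N k x)
    (fun x i => by simp only [hg x i, periodicCoord_character d N k x i]) j
  have key : w * gridSum d N k (fwdDiffDir d (2 * π / N) j g)
      = -(w - 1) * gridSum d N k g := by
    have h1 : w * gridSum d N k (fwdDiffDir d (2 * π / N) j g)
        = (∑ n : Fin d → Fin N, g (gridPt d N n + Pi.single j (2 * π / N)) *
            character d N k (gridPt d N n + Pi.single j (2 * π / N)))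
          - w * gridSum d N k g := by
      simp only [gridSum, Finset.mul_sum, ← Finset.sum_sub_distrib, fwdDiffDir,
        character_add_single, hwe]
      refine Finset.sum_congr rfl fun n _ => ?_
      ring
    rw [h1, hshift]
    change gridSum d N k g - _ = _
    ring
  have := congrArg norm key
  rwa [norm_mul, norm_mul, norm_neg, hwn, one_mul] at this

lemma norm_gridSum_applyDiffs (d N : ℕ) (hN : 2 ≤ N) (k : Fin d → Fin N)
    (f : (Fin d → ℝ) → ℂ) (hf : PeriodicCoord d f) (L : List (Fin d)) :
    ‖gridSum d N k (applyDiffs d (2 * π / N) L f)‖ =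
      (L.map fun j => ‖Complex.exp (-(2 * π * Complex.I * ((k j : ℕ) : ℂ)) / N) - 1‖).prod *
        ‖gridSum d N k f‖ := by
  induction L with
  | nil => simp [applyDiffs]
  | cons j L ih =>
    rw [applyDiffs, norm_gridSum_fwdDiffDir d N hN k _ (hf.applyDiffs _ L) j, ih, List.map_cons,
      List.prod_cons]
    ring

lemma norm_gridSum_le (d N : ℕ) (k : Fin d → Fin N) (g : (Fin d → ℝ) → ℂ) (B : ℝ)
    (hB : ∀ x, ‖g x‖ ≤ B) : ‖gridSum d N k g‖ ≤ (N : ℝ) ^ d * B := by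
  refine (norm_sum_le _ _).trans ?_
  refine (Finset.sum_le_card_nsmul _ _ B fun n _ => ?_).trans (le_of_eq ?_)
  · rw [norm_mul, norm_character, mul_one]
    exact hB _
  · simp

lemma prod_map_flatMap_replicate {α : Type*} (M : ℕ) (a : α → ℝ) (l : List α) :
    ((l.flatMap fun j => List.replicate M j).map a).prod = (l.map fun j => a j ^ M).prod := by
  induction l with
  | nil => simp
  | cons i l ih => simp [List.flatMap_cons, ih]

lemma exp_sub_one_ne_zero (N m : ℕ) (hm : m ≠ 0) (hmN : m < N) :
    Complex.exp (-(2 * π * Complex.I * (m : ℂ)) / N) - 1 ≠ 0 := by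
  intro h0
  obtain ⟨z, hz⟩ := Complex.exp_eq_one_iff.mp (sub_eq_zero.mp h0)
  have hNC : (N : ℂ) ≠ 0 := by
    exact_mod_cast (by omega : N ≠ 0)
  have h2 : (2 * π * Complex.I : ℂ) ≠ 0 := Complex.two_pi_I_ne_zero
  rw [div_eq_iff hNC] at hz
  have h3 : (-(m : ℂ)) = z * N := by
    apply mul_left_cancel₀ h2
    linear_combination hz
  have h4 : -(m : ℤ) = z * N := by exact_mod_cast h3
  have h5 : (N : ℤ) ∣ m := (dvd_neg).mp ⟨z, by rw [h4]; ring⟩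
  have h6 : N ∣ m := by exact_mod_cast h5
  exact absurd (Nat.le_of_dvd (by omega) h6) (by omega)

/-- If `f : ℝ^d → ℂ` is `2π`-periodic in each variable and the mixed
partial derivative `∂₁^M ⋯ ∂_d^M f` exists everywhere and is bounded by `K`, then the
discrete Fourier coefficients on the `N^d` grid satisfy, for indices `k` with all
components nonzero,
`|c_k| ≤ N^d (2π/N)^{M d} K ∏_j |e^{-2πi k_j/N} - 1|^{-M}`. -/
theorem stmt0 (d M N : ℕ) (hd : 1 ≤ d) (hN : 2 ≤ N)
    (f : (Fin d → ℝ) → ℂ)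
    (hper : ∀ (x : Fin d → ℝ) (j : Fin d), f (x + Pi.single j (2 * π)) = f x)
    (ops : List (Fin d))
    (hops : ops = (List.finRange d).flatMap fun j => List.replicate M j)
    -- existence of the mixed derivative: every intermediate partial derivative exists
    (hex : ∀ (j : Fin d) (rest : List (Fin d)), (j :: rest) <:+ ops →
      ∀ x : Fin d → ℝ, LineDifferentiableAt ℝ (applyOps d rest f) x (Pi.single j 1))
    -- boundedness of the mixed derivative
    (K : ℝ) (hK : ∀ x, ‖applyOps d ops f x‖ ≤ K)
    (c : (Fin d → Fin N) → ℂ)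
    (hc : ∀ k : Fin d → Fin N, c k = ∑ n : Fin d → Fin N,
      f (fun j => 2 * π * (n j : ℕ) / N) *
        Complex.exp (-(2 * π * Complex.I / N) * ((∑ j, (k j : ℕ) * (n j : ℕ) : ℕ) : ℂ)))
    (k : Fin d → Fin N) (hk : ∀ j, (k j : ℕ) ≠ 0) :
    ‖c k‖ ≤ (N : ℝ) ^ d * (2 * π / N) ^ (M * d) * K *
      ∏ j, (‖Complex.exp (-(2 * π * Complex.I * ((k j : ℕ) : ℂ)) / N) - 1‖ ^ M)⁻¹ := by
  have hh : (0 : ℝ) ≤ 2 * π / N := by positivity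
  have hck : c k = gridSum d N k f := by
    rw [hc, gridSum]
    refine Finset.sum_congr rfl fun n _ => ?_
    simp only [character, gridPt]
    congr 2
    push_cast
    simp only [Finset.mul_sum]
    refine Finset.sum_congr rfl fun j _ => ?_
    ring
  have hlen : ops.length = M * d := by
    rw [hops]
    simp [List.length_flatMap, mul_comm]
  have hupper := norm_gridSum_le d N k _ _
    (norm_applyDiffs_le d (2 * π / N) hh f ops hex K hK ops [] (by simp))
  have heq := norm_gridSum_applyDiffs d N hN k f hper ops
  simp only [applyOps] at hupper
  rw [heq, hlen, hops, prod_map_flatMap_replicate, ← Fin.prod_univ_def, ← hck] at hupper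
  have hpos : 0 < ∏ j, ‖Complex.exp (-(2 * π * Complex.I * ((k j : ℕ) : ℂ)) / N) - 1‖ ^ M :=
    Finset.prod_pos fun j _ =>
      pow_pos (norm_pos_iff.mpr (exp_sub_one_ne_zero N _ (hk j) (k j).isLt)) M
  rw [Finset.prod_inv_distrib, ← div_eq_mul_inv, le_div_iff₀ hpos]
  linarith
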